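/- Let K ⊆ ℝ^n be a convex body, s ∈ ℝ^n, and δ ≥ 1. Let T ⊆ ℝ^n be a convex body with (√n/δ)·E_{f_s} ⊆ T ⊆ δ√n·E_{f_s}, where E_{f_s} is the inertial ellipsoid of f_s. Then N(K,T) ≤ (12δ)^n · (4/3) · (sup_{x ∈ K} f_s(x)) / f_s(b(K)), where b(K) is the centroid of K. -/

import Mathlib

/-!
Write `f = f_s`, `b` for its centroid, `C` for its covariance and `S = sup_K f`. If `X` has density
proportional to `f`, the mean of `⟨X - b, C⁻¹ (X - b)⟩` is `tr (C⁻¹ C) = n` (`integral_quadForm`),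
so by Markov's inequality `L = K ∩ (b + 2√n E_f)` (`core`) carries at least three quarters of the
mass of `f`, and `(3/4) ∫ f ≤ S vol L` (`three_quarters_le`). Jensen's inequality gives
`f(b(K)) vol K ≤ ∫ f` (`expWeight_centroid_mul_le`). Hence `vol K / vol L ≤ (4/3) S / f(b(K))`.

For `t > 0`, a maximal family of disjoint translates `x + tL`, `x ∈ K`, lies in `(1 + t) K`, so it
has at most `((1 + t)/t)ⁿ vol K / vol L` members, and its centres cover `K` by translates of
`t(L - L)` (`exists_cover_smul_sub`). Since `L - L ⊆ 4√n E_f`, the choice `t = 1/(4δ)` makes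
`t(L - L) ⊆ (√n/δ) E_f ⊆ T`, and `(1 + t)/t = 1 + 4δ ≤ 12δ`.
-/

open MeasureTheory Pointwise
open scoped ENNReal RealInnerProductSpace

noncomputable section

abbrev Euc (n : ℕ) := EuclideanSpace ℝ (Fin n)

/-- A convex body: a compact convex set with nonempty interior. -/
def IsConvexBody {n : ℕ} (K : Set (Euc n)) : Prop :=
  Convex ℝ K ∧ IsCompact K ∧ (interior K).Nonempty

/-- The covering number `N(K,T)`: the least cardinality of a finite set `Λ`
with `K ⊆ Λ + T`.  It is `⊤` if no finite cover exists. -/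
def coveringNumber {n : ℕ} (K T : Set (Euc n)) : ℕ∞ :=
  sInf {m : ℕ∞ | ∃ Λ : Finset (Euc n), (Λ.card : ℕ∞) = m ∧ K ⊆ ↑Λ + T}

/-- The centroid (barycenter) of a set `K`. -/
def centroid {n : ℕ} (K : Set (Euc n)) : Euc n :=
  (volume K).toReal⁻¹ • ∫ x in K, x

/-- The exponential reweighting `f_s` of the uniform density on `K`:
`f_s(x) = exp ⟨s,x⟩` on `K` and `0` elsewhere. -/
def expWeight {n : ℕ} (K : Set (Euc n)) (s : Euc n) (x : Euc n) : ℝ :=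
  Set.indicator K (fun y => Real.exp ⟪s, y⟫) x

/-- The centroid (barycenter) of a density `f`. -/
def funCentroid {n : ℕ} (f : Euc n → ℝ) : Euc n :=
  (∫ x, f x)⁻¹ • ∫ x, f x • x

/-- The covariance matrix of a density `f`. -/
def funCov {n : ℕ} (f : Euc n → ℝ) : Matrix (Fin n) (Fin n) ℝ :=
  Matrix.of ((∫ x, f x)⁻¹ •
    ∫ x, fun i j => f x * ((x i - funCentroid f i) * (x j - funCentroid f j)))

/-- The inertial ellipsoid of a density `f`. -/
def funEllipsoid {n : ℕ} (f : Euc n → ℝ) : Set (Euc n) :=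
  {x | ∑ i, ∑ j, x i * (funCov f)⁻¹ i j * x j ≤ 1}

/-- The isotropic constant of a density `f` in dimension `n`. -/
def isotropicConstant {n : ℕ} (f : Euc n → ℝ) : ℝ :=
  ((⨆ x, f x) / ∫ x, f x) ^ ((n : ℝ)⁻¹) * (funCov f).det ^ ((2 * (n : ℝ))⁻¹)

/-! ### Covering by translates of a difference set -/

/-- Volumetric packing bound: translates of `t • L` by points of `K` all lie in `(1 + t) • K`, so a
maximal disjoint family of them is finite with the stated cardinality bound, and maximality turns it
into a cover of `K` by translates of `t • (L - L)`. -/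
lemma exists_cover_smul_sub {n : ℕ} {K L : Set (Euc n)} (hK : Convex ℝ K) (hKc : IsCompact K)
    (hLc : IsCompact L) (hLK : L ⊆ K) (hL : 0 < volume.real L) {t : ℝ} (ht : 0 < t) :
    ∃ Λ : Finset (Euc n), K ⊆ ↑Λ + t • (L - L) ∧
      Λ.card * (t ^ n * volume.real L) ≤ (1 + t) ^ n * volume.real K := by
  classical
  let P : Finset (Euc n) → Prop := fun F =>
    ↑F ⊆ K ∧ (F : Set (Euc n)).PairwiseDisjoint fun x => x +ᵥ t • L
  have hbound : ∀ F, P F →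
      F.card * (t ^ n * volume.real L) ≤ (1 + t) ^ n * volume.real K := by
    rintro F ⟨hFK, hFd⟩
    have hmeas : ∀ x ∈ F, MeasurableSet (x +ᵥ t • L) := fun x _ =>
      ((hLc.smul t).vadd x).measurableSet
    have hvol : volume.real (⋃ x ∈ F, (x +ᵥ t • L)) = F.card * (t ^ n * volume.real L) := by
      rw [measureReal_biUnion_finset hFd hmeas
        (fun x _ => ((hLc.smul t).vadd x).measure_lt_top.ne)]
      simp [Measure.real, measure_vadd, Measure.addHaar_smul, abs_of_pos ht, ht.le]
    have hsub : (⋃ x ∈ F, (x +ᵥ t • L)) ⊆ (1 + t) • K := by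
      rw [hK.add_smul zero_le_one ht.le, one_smul]
      intro y hy
      simp only [Set.mem_iUnion] at hy
      obtain ⟨x, hx, l, hl, rfl⟩ := hy
      exact Set.add_mem_add (hFK hx) (Set.smul_set_mono hLK hl)
    have h1t : 0 < 1 + t := by positivity
    have := measureReal_mono hsub (μ := volume) (hKc.smul (1 + t)).measure_lt_top.ne
    rw [hvol] at this
    refine this.trans_eq ?_
    simp [Measure.real, Measure.addHaar_smul, abs_of_pos h1t, h1t.le]
  have hc : 0 < t ^ n * volume.real L := by positivity
  -- a packing of greatest cardinality
  obtain ⟨F, hF, hmax⟩ : ∃ F, P F ∧ ∀ G, P G → G.card ≤ F.card := by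
    obtain ⟨N, hN⟩ := exists_nat_ge ((1 + t) ^ n * volume.real K / (t ^ n * volume.real L))
    let Q : ℕ → Prop := fun m => ∃ F, P F ∧ F.card = m
    have hQ0 : Q 0 := ⟨∅, ⟨by simp, by simp⟩, rfl⟩
    have hQ : ∀ m, Q m → m ≤ N := by
      rintro m ⟨F, hF, rfl⟩
      have := (le_div_iff₀ hc).2 (hbound F hF)
      exact_mod_cast this.trans hN
    obtain ⟨F, hF, hFm⟩ : Q (Nat.findGreatest Q N) := Nat.findGreatest_spec (Nat.zero_le N) hQ0
    exact ⟨F, hF, fun G hG => hFm ▸ Nat.le_findGreatest (hQ _ ⟨G, hG, rfl⟩) ⟨G, hG, rfl⟩⟩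
  refine ⟨F, fun y hy => ?_, hbound F hF⟩
  obtain ⟨l₀, hl₀⟩ : L.Nonempty := by
    by_contra h
    simp [Set.not_nonempty_iff_eq_empty.1 h] at hL
  by_cases hyF : y ∈ F
  · exact ⟨y, hyF, 0, ⟨0, ⟨l₀, hl₀, l₀, hl₀, by simp⟩, by simp⟩, by simp⟩
  have hnot : ¬ P (insert y F) := fun h => by
    have := hmax _ h
    rw [Finset.card_insert_of_notMem hyF] at this
    omega
  have hex : ∃ x ∈ F, ¬ Disjoint (y +ᵥ t • L) (x +ᵥ t • L) := by
    by_contra! h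
    refine hnot ⟨?_, ?_⟩
    · rw [Finset.coe_insert]
      exact Set.insert_subset hy hF.1
    · rw [Finset.coe_insert]
      exact hF.2.insert fun x hx _ => h x hx
  obtain ⟨x, hx, hdis⟩ := hex
  obtain ⟨z, ⟨_, ⟨l, hl, rfl⟩, hz₁⟩, ⟨_, ⟨l', hl', rfl⟩, hz₂⟩⟩ := Set.not_disjoint_iff.1 hdis
  refine ⟨x, hx, t • (l' - l), ⟨l' - l, ⟨l', hl', l, hl, rfl⟩, rfl⟩, ?_⟩
  simp only [vadd_eq_add] at hz₁ hz₂
  simp only [smul_sub]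
  rw [← add_sub_assoc, hz₂, ← hz₁, add_sub_cancel_right]

/-! ### The quadratic form of a matrix -/

/-- The quadratic form `yᵀ M y`, written as in `funEllipsoid`. -/
def quadForm {n : ℕ} (M : Matrix (Fin n) (Fin n) ℝ) (y : Euc n) : ℝ :=
  ∑ i, ∑ j, y i * M i j * y j

lemma quadForm_smul {n : ℕ} (M : Matrix (Fin n) (Fin n) ℝ) (c : ℝ) (y : Euc n) :
    quadForm M (c • y) = c ^ 2 * quadForm M y := by
  simp only [quadForm, Finset.mul_sum, PiLp.smul_apply, smul_eq_mul]
  exact Finset.sum_congr rfl fun i _ => Finset.sum_congr rfl fun j _ => by ring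

lemma quadForm_sub_add {n : ℕ} (M : Matrix (Fin n) (Fin n) ℝ) (x y : Euc n) :
    quadForm M (x - y) + quadForm M (x + y) = 2 * quadForm M x + 2 * quadForm M y := by
  simp only [quadForm, Finset.mul_sum, ← Finset.sum_add_distrib, PiLp.sub_apply, PiLp.add_apply]
  exact Finset.sum_congr rfl fun i _ => Finset.sum_congr rfl fun j _ => by ring

lemma quadForm_nonneg {n : ℕ} {M : Matrix (Fin n) (Fin n) ℝ} (hM : M.PosSemidef) (y : Euc n) :
    0 ≤ quadForm M y := by
  have h := hM.dotProduct_mulVec_nonneg (fun i => y i)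
  simpa [quadForm, dotProduct, Matrix.mulVec, Finset.mul_sum, mul_assoc] using h

lemma quadForm_sub_le {n : ℕ} {M : Matrix (Fin n) (Fin n) ℝ} (hM : M.PosSemidef) (x y : Euc n) :
    quadForm M (x - y) ≤ 2 * quadForm M x + 2 * quadForm M y := by
  linarith [quadForm_sub_add M x y, quadForm_nonneg hM (x + y)]

lemma continuous_quadForm {n : ℕ} (M : Matrix (Fin n) (Fin n) ℝ) :
    Continuous (quadForm M) := by
  unfold quadForm
  fun_prop

/-! ### The covariance matrix of the exponential weight -/

lemma integral_expWeight_mul {n : ℕ} {K : Set (Euc n)} (hKc : IsCompact K) (s : Euc n)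
    (h : Euc n → ℝ) :
    ∫ x, expWeight K s x * h x = ∫ x in K, Real.exp ⟪s, x⟫ * h x := by
  rw [← integral_indicator hKc.measurableSet]
  refine integral_congr_ae (Filter.Eventually.of_forall fun x => ?_)
  by_cases hx : x ∈ K <;> simp [expWeight, hx]

lemma integral_expWeight {n : ℕ} {K : Set (Euc n)} (hKc : IsCompact K) (s : Euc n) :
    ∫ x, expWeight K s x = ∫ x in K, Real.exp ⟪s, x⟫ := by
  simpa using integral_expWeight_mul hKc s fun _ => 1

lemma integrable_expWeight_mul {n : ℕ} {K : Set (Euc n)} (hKc : IsCompact K) (s : Euc n)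
    {h : Euc n → ℝ} (hh : Continuous h) :
    Integrable fun x => expWeight K s x * h x := by
  have h1 : IntegrableOn (fun x => Real.exp ⟪s, x⟫ * h x) K :=
    (by fun_prop : Continuous fun x => Real.exp ⟪s, x⟫ * h x).continuousOn.integrableOn_compact hKc
  refine ((integrable_indicator_iff hKc.measurableSet).2 h1).congr
    (Filter.Eventually.of_forall fun x => ?_)
  by_cases hx : x ∈ K <;> simp [expWeight, hx]

lemma integral_expWeight_mul_pos {n : ℕ} {K : Set (Euc n)} (hKc : IsCompact K) (s : Euc n)
    {h : Euc n → ℝ} (hh : Continuous h) (h0 : ∀ x, 0 ≤ h x) (hex : ∃ x ∈ interior K, h x ≠ 0) :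
    0 < ∫ x, expWeight K s x * h x := by
  have hw : ∀ x, 0 ≤ expWeight K s x := fun x =>
    Set.indicator_nonneg (fun _ _ => (Real.exp_pos _).le) x
  rw [integral_pos_iff_support_of_nonneg (fun x => mul_nonneg (hw x) (h0 x))
    (integrable_expWeight_mul hKc s hh)]
  have hopen : IsOpen (interior K ∩ {x | h x ≠ 0}) :=
    isOpen_interior.inter (isOpen_ne_fun hh continuous_const)
  refine (hopen.measure_pos volume hex).trans_le (measure_mono ?_)
  rintro x ⟨hxK, hx⟩
  have hxK' := interior_subset hxK
  simpa [expWeight, hxK', Real.exp_ne_zero] using hx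

lemma integral_expWeight_pos {n : ℕ} {K : Set (Euc n)} (hK : IsConvexBody K) (s : Euc n) :
    0 < ∫ x, expWeight K s x := by
  obtain ⟨x, hx⟩ := hK.2.2
  simpa using integral_expWeight_mul_pos hK.2.1 s (h := fun _ => 1) continuous_const
    (fun _ => zero_le_one) ⟨x, hx, one_ne_zero⟩

lemma funCov_expWeight_apply {n : ℕ} {K : Set (Euc n)} (hKc : IsCompact K) (s : Euc n)
    (i j : Fin n) :
    funCov (expWeight K s) i j = (∫ x, expWeight K s x)⁻¹ *
      ∫ x, expWeight K s x * ((x i - funCentroid (expWeight K s) i) *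
        (x j - funCentroid (expWeight K s) j)) := by
  have hint : ∀ i j, Integrable fun x => expWeight K s x *
      ((x i - funCentroid (expWeight K s) i) * (x j - funCentroid (expWeight K s) j)) :=
    fun i j => integrable_expWeight_mul hKc s (by fun_prop)
  simp only [funCov, Matrix.of_apply, Pi.smul_apply, smul_eq_mul]
  rw [eval_integral (fun i => Integrable.of_eval (hint i)), eval_integral (hint i)]

/-- The identity behind both positive definiteness of the covariance and the trace
computation: linear combinations of covariance entries are weighted integrals. -/
lemma sum_mul_funCov {n : ℕ} {K : Set (Euc n)} (hKc : IsCompact K) (s : Euc n)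
    (A : Fin n → Fin n → ℝ) :
    ∑ i, ∑ j, A i j * funCov (expWeight K s) i j = (∫ x, expWeight K s x)⁻¹ *
      ∫ x, expWeight K s x * ∑ i, ∑ j, A i j * ((x i - funCentroid (expWeight K s) i) *
        (x j - funCentroid (expWeight K s) j)) := by
  have hint : ∀ i j, Integrable fun x => expWeight K s x * (A i j *
      ((x i - funCentroid (expWeight K s) i) * (x j - funCentroid (expWeight K s) j))) :=
    fun i j => integrable_expWeight_mul hKc s (by fun_prop)
  simp only [Finset.mul_sum]
  rw [integral_finsetSum _ fun i _ => integrable_finsetSum _ fun j _ => hint i j, Finset.mul_sum]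
  refine Finset.sum_congr rfl fun i _ => ?_
  rw [integral_finsetSum _ fun j _ => hint i j, Finset.mul_sum]
  refine Finset.sum_congr rfl fun j _ => ?_
  rw [funCov_expWeight_apply hKc]
  simp only [mul_left_comm _ (A i j)]
  rw [integral_const_mul, mul_left_comm]

lemma funCov_expWeight_posDef {n : ℕ} {K : Set (Euc n)} (hK : IsConvexBody K) (s : Euc n) :
    (funCov (expWeight K s)).PosDef := by
  rw [Matrix.posDef_iff_dotProduct_mulVec]
  refine ⟨?_, fun v hv => ?_⟩
  · ext i j
    rw [Matrix.conjTranspose_apply, star_trivial, funCov_expWeight_apply hK.2.1,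
      funCov_expWeight_apply hK.2.1]
    congr 2
    funext x
    ring
  set b := funCentroid (expWeight K s)
  have hkey : star v ⬝ᵥ (funCov (expWeight K s)).mulVec v =
      (∫ x, expWeight K s x)⁻¹ * ∫ x, expWeight K s x * (∑ i, v i * (x i - b i)) ^ 2 := by
    have h : star v ⬝ᵥ (funCov (expWeight K s)).mulVec v =
        ∑ i, ∑ j, v i * v j * funCov (expWeight K s) i j := by
      simp only [dotProduct, Matrix.mulVec, Finset.mul_sum, star_trivial]
      exact Finset.sum_congr rfl fun i _ => Finset.sum_congr rfl fun j _ => by ring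
    rw [h, sum_mul_funCov hK.2.1 s fun i j => v i * v j]
    congr 2
    funext x
    rw [sq, Finset.sum_mul_sum]
    congr 1
    exact Finset.sum_congr rfl fun i _ => Finset.sum_congr rfl fun j _ => by ring
  rw [hkey]
  refine mul_pos (inv_pos.2 (integral_expWeight_pos hK s))
    (integral_expWeight_mul_pos hK.2.1 s (by fun_prop) (fun _ => sq_nonneg _) ?_)
  -- moving an interior point a little in the direction `v` makes the linear form nonzero
  obtain ⟨x, hx⟩ := hK.2.2
  by_contra! hall
  have hv2 : 0 < ∑ i, v i * v i := by
    obtain ⟨i, hi⟩ := Function.ne_iff.1 hv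
    exact Finset.sum_pos' (fun i _ => mul_self_nonneg _) ⟨i, Finset.mem_univ _,
      mul_self_pos.2 hi⟩
  let V : Euc n := WithLp.toLp 2 v
  have hcont : Continuous fun ε : ℝ => x + ε • V := by fun_prop
  have hnhds : ∀ᶠ ε in nhds (0 : ℝ), x + ε • V ∈ interior K :=
    hcont.continuousAt.eventually_mem (by simpa using isOpen_interior.mem_nhds hx)
  obtain ⟨ε, hε, hε0⟩ := ((hnhds.filter_mono nhdsWithin_le_nhds).and
    (self_mem_nhdsWithin : Set.Ioi (0 : ℝ) ∈ nhdsWithin 0 (Set.Ioi 0))).exists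
  have h1 := pow_eq_zero_iff (two_ne_zero) |>.1 (hall x hx)
  have h2 := pow_eq_zero_iff (two_ne_zero) |>.1 (hall _ hε)
  have h3 : ∑ i, v i * ((x + ε • V) i - b i) =
      ∑ i, v i * (x i - b i) + ε * ∑ i, v i * v i := by
    rw [Finset.mul_sum, ← Finset.sum_add_distrib]
    exact Finset.sum_congr rfl fun i _ => by simp [V]; ring
  rw [h2, h1, zero_add] at h3
  exact absurd h3.symm (mul_pos hε0 hv2).ne'

/-- The mean of `⟨X - b, cov⁻¹ (X - b)⟩` is `tr (cov⁻¹ cov) = n`. -/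
lemma integral_quadForm {n : ℕ} {K : Set (Euc n)} (hK : IsConvexBody K) (s : Euc n) :
    ∫ x, expWeight K s x * quadForm (funCov (expWeight K s))⁻¹
      (x - funCentroid (expWeight K s)) = n * ∫ x, expWeight K s x := by
  set C := funCov (expWeight K s) with hC
  have hpd : C.PosDef := funCov_expWeight_posDef hK s
  have hsymm : ∀ i j, C i j = C j i := fun i j => by
    simpa using (hpd.isHermitian.apply i j).symm
  have h := sum_mul_funCov hK.2.1 s fun i j => C⁻¹ i j
  have htr : ∑ i, ∑ j, C⁻¹ i j * C i j = n := by
    have h1 : (C⁻¹ * C).trace = n := by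
      rw [Matrix.nonsing_inv_mul _ ((Matrix.isUnit_iff_isUnit_det _).1 hpd.isUnit)]
      simp
    rw [← h1]
    simp only [Matrix.trace, Matrix.diag, Matrix.mul_apply]
    exact Finset.sum_congr rfl fun i _ => Finset.sum_congr rfl fun j _ => by rw [hsymm i j]
  rw [← hC, htr] at h
  have hpos := integral_expWeight_pos hK s
  rw [h, mul_comm, ← mul_assoc, mul_inv_cancel₀ hpos.ne', one_mul]
  congr 1
  funext x
  simp only [quadForm, PiLp.sub_apply]
  congr 1
  exact Finset.sum_congr rfl fun i _ => Finset.sum_congr rfl fun j _ => by ring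

/-! ### Volume comparison -/

lemma volume_real_pos {n : ℕ} {K : Set (Euc n)} (hK : IsConvexBody K) : 0 < volume.real K :=
  ENNReal.toReal_pos (Measure.measure_pos_of_nonempty_interior _ hK.2.2).ne' hK.2.1.measure_lt_top.ne

lemma centroid_eq_average {n : ℕ} (K : Set (Euc n)) : centroid K = ⨍ x in K, x := by
  rw [setAverage_eq]; rfl

lemma centroid_mem {n : ℕ} {K : Set (Euc n)} (hK : IsConvexBody K) : centroid K ∈ K := by
  rw [centroid_eq_average]
  exact hK.1.set_average_mem hK.2.1.isClosed (Measure.measure_pos_of_nonempty_interior _ hK.2.2).ne'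
    hK.2.1.measure_lt_top.ne (ae_restrict_mem hK.2.1.measurableSet)
    (continuous_id.continuousOn.integrableOn_compact hK.2.1)

/-- Jensen's inequality for the convex function `exp ⟨s, ·⟩`. -/
lemma expWeight_centroid_mul_le {n : ℕ} {K : Set (Euc n)} (hK : IsConvexBody K) (s : Euc n) :
    expWeight K s (centroid K) * volume.real K ≤ ∫ x, expWeight K s x := by
  have hconv : ConvexOn ℝ Set.univ fun x : Euc n => Real.exp ⟪s, x⟫ :=
    convexOn_exp.comp_linearMap (innerₛₗ ℝ s)
  have hcont : Continuous fun x : Euc n => Real.exp ⟪s, x⟫ := by fun_prop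
  have h := hconv.map_set_average_le (f := fun x => x) (t := K) (μ := volume) hcont.continuousOn
    isClosed_univ (Measure.measure_pos_of_nonempty_interior _ hK.2.2).ne' hK.2.1.measure_lt_top.ne
    (by simp) (continuous_id.continuousOn.integrableOn_compact hK.2.1)
    (hcont.continuousOn.integrableOn_compact hK.2.1)
  rw [← centroid_eq_average, setAverage_eq, smul_eq_mul, inv_mul_eq_div,
    le_div_iff₀ (volume_real_pos hK)] at h
  rw [integral_expWeight hK.2.1]
  simpa [expWeight, centroid_mem hK] using h

lemma expWeight_le_iSup {n : ℕ} {K : Set (Euc n)} (hKc : IsCompact K) (s : Euc n) {x : Euc n}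
    (hx : x ∈ K) : expWeight K s x ≤ ⨆ x ∈ K, expWeight K s x := by
  have hcont : Continuous fun x : Euc n => Real.exp ⟪s, x⟫ := by fun_prop
  obtain ⟨B, hB⟩ := hKc.bddAbove_image hcont.continuousOn
  have hB0 : 0 ≤ max B 0 := le_max_right _ _
  have hbdd : BddAbove (Set.range fun x => ⨆ _ : x ∈ K, expWeight K s x) := by
    refine ⟨max B 0, ?_⟩
    rintro _ ⟨y, rfl⟩
    by_cases hy : y ∈ K
    · simpa [hy, expWeight] using Or.inl (hB ⟨y, hy, rfl⟩)
    · simp [hy]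
  have := le_ciSup hbdd x
  simpa [hx] using this

/-- The part of `K` within Mahalanobis distance `2√n` of the centroid of `f_s`. -/
def core {n : ℕ} (K : Set (Euc n)) (s : Euc n) : Set (Euc n) :=
  K ∩ {x | quadForm (funCov (expWeight K s))⁻¹ (x - funCentroid (expWeight K s)) ≤ 4 * n}

lemma isCompact_core {n : ℕ} {K : Set (Euc n)} (hKc : IsCompact K) (s : Euc n) :
    IsCompact (core K s) :=
  hKc.inter_right (isClosed_le ((continuous_quadForm _).comp (by fun_prop)) continuous_const)

/-- Markov's inequality: `core K s` carries at least three quarters of the mass of `f_s`, and that mass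
is at most `sup f_s` times the volume of `core K s`. -/
lemma three_quarters_le {n : ℕ} (hn : 0 < n) {K : Set (Euc n)} (hK : IsConvexBody K)
    (s : Euc n) :
    3 / 4 * ∫ x, expWeight K s x ≤ (⨆ x ∈ K, expWeight K s x) * volume.real (core K s) := by
  set S := ⨆ x ∈ K, expWeight K s x
  set q := fun x => quadForm (funCov (expWeight K s))⁻¹ (x - funCentroid (expWeight K s)) with hq
  have hqc : Continuous q := (continuous_quadForm _).comp (by fun_prop)
  have hq0 : ∀ x, 0 ≤ q x := fun x =>
    quadForm_nonneg (funCov_expWeight_posDef hK s).inv.posSemidef _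
  have hLc := isCompact_core hK.2.1 s
  have hn' : (0 : ℝ) < n := Nat.cast_pos.2 hn
  have hi : Integrable ((core K s).indicator fun _ => (4 * n * S : ℝ)) :=
    (integrable_indicator_iff hLc.measurableSet).2
      (integrableOn_const hLc.measure_lt_top.ne)
  have hiq := integrable_expWeight_mul hK.2.1 s hqc
  have hi1 : Integrable (expWeight K s) := by
    simpa using integrable_expWeight_mul hK.2.1 s (continuous_const (y := (1 : ℝ)))
  have hmono : ∫ x, 4 * n * expWeight K s x ≤
      ∫ x, ((core K s).indicator (fun _ => (4 * n * S : ℝ)) x + expWeight K s x * q x) := by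
    refine integral_mono (hi1.const_mul _) (hi.add hiq) fun x => ?_
    have hw : 0 ≤ expWeight K s x := Set.indicator_nonneg (fun _ _ => (Real.exp_pos _).le) x
    by_cases hxK : x ∈ K
    · by_cases hxL : q x ≤ 4 * n
      · have : x ∈ core K s := ⟨hxK, hxL⟩
        simp only [Set.indicator_of_mem this]
        have := mul_le_mul_of_nonneg_left (expWeight_le_iSup hK.2.1 s hxK)
          (by positivity : (0 : ℝ) ≤ 4 * n)
        linarith [mul_nonneg hw (hq0 x)]
      · have : x ∉ core K s := fun h => hxL h.2
        simp only [Set.indicator_of_notMem this]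
        nlinarith [not_le.1 hxL]
    · have : x ∉ core K s := fun h => hxK h.1
      simp [this, expWeight, hxK]
  rw [integral_add hi hiq, integral_const_mul, integral_indicator hLc.measurableSet,
    integral_quadForm hK s, setIntegral_const, smul_eq_mul] at hmono
  refine le_of_mul_le_mul_left ?_ hn'
  nlinarith

theorem covering_number_K_le_inertial
    {n : ℕ} (K : Set (Euc n)) (hK : IsConvexBody K) (s : Euc n)
    (δ : ℝ) (hδ : 1 ≤ δ) (T : Set (Euc n)) (hT : IsConvexBody T)
    (hT1 : (Real.sqrt n / δ) • funEllipsoid (expWeight K s) ⊆ T)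
    (hT2 : T ⊆ (δ * Real.sqrt n) • funEllipsoid (expWeight K s)) :
    (coveringNumber K T : ℝ≥0∞) ≤
      ENNReal.ofReal ((12 * δ) ^ n * (4 / 3) *
        (⨆ x ∈ K, expWeight K s x) / expWeight K s (centroid K)) := by
  have hw0 : 0 < expWeight K s (centroid K) := by
    simp [expWeight, centroid_mem hK, Real.exp_pos]
  have hSw := expWeight_le_iSup hK.2.1 s (centroid_mem hK)
  set S := ⨆ x ∈ K, expWeight K s x
  set w := expWeight K s (centroid K)
  have hS0 : 0 < S := hw0.trans_le hSw
  suffices h : ∃ Λ : Finset (Euc n), K ⊆ ↑Λ + T ∧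
      (Λ.card : ℝ) ≤ (12 * δ) ^ n * (4 / 3) * S / w by
    obtain ⟨Λ, hΛ, hcard⟩ := h
    have h1 : coveringNumber K T ≤ Λ.card := sInf_le ⟨Λ, rfl, hΛ⟩
    calc (coveringNumber K T : ℝ≥0∞) ≤ ((Λ.card : ℕ∞) : ℝ≥0∞) := ENat.toENNReal_mono h1
      _ = ENNReal.ofReal Λ.card := by simp
      _ ≤ _ := ENNReal.ofReal_le_ofReal hcard
  rcases Nat.eq_zero_or_pos n with rfl | hn
  -- in dimension zero every nonempty set is the whole space, so one translate suffices
  · obtain ⟨y, hy⟩ := hT.2.2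
    refine ⟨{0}, fun x _ => ⟨0, by simp, y, interior_subset hy, Subsingleton.elim _ _⟩, ?_⟩
    rw [le_div_iff₀ hw0]
    simp
    linarith
  have hn' : (0 : ℝ) < n := Nat.cast_pos.2 hn
  have hδ0 : 0 < δ := zero_lt_one.trans_le hδ
  have hmark := three_quarters_le hn hK s
  have hjen := expWeight_centroid_mul_le hK s
  have hL0 : 0 < volume.real (core K s) := by
    have := integral_expWeight_pos hK s
    exact pos_of_mul_pos_right (lt_of_lt_of_le (by positivity) hmark) hS0.le
  -- `t = 1 / (4δ)` is the scale at which `t • (core - core)` fits into the given ellipsoid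
  have ht : 0 < 1 / (4 * δ) := by positivity
  obtain ⟨Λ, hΛ, hcard⟩ := exists_cover_smul_sub hK.1 hK.2.1 (isCompact_core hK.2.1 s)
    Set.inter_subset_left hL0 ht
  refine ⟨Λ, hΛ.trans (Set.add_subset_add_left (Set.Subset.trans ?_ hT1)), ?_⟩
  · rintro _ ⟨_, ⟨x, hx, y, hy, rfl⟩, rfl⟩
    have hr : 0 < √(n : ℝ) / δ := by positivity
    rw [Set.mem_smul_set_iff_inv_smul_mem₀ hr.ne']
    change quadForm (funCov (expWeight K s))⁻¹ _ ≤ 1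
    simp only [quadForm_smul]
    have h1 := quadForm_sub_le (funCov_expWeight_posDef hK s).inv.posSemidef
      (x - funCentroid (expWeight K s)) (y - funCentroid (expWeight K s))
    rw [sub_sub_sub_cancel_right] at h1
    have h2 := hx.2
    have h3 := hy.2
    simp only [Set.mem_ofPred_eq] at h2 h3
    have h4 : quadForm (funCov (expWeight K s))⁻¹ (x - y) ≤ 16 * n := by linarith
    have h5 : ((√(n : ℝ) / δ)⁻¹) ^ 2 = δ ^ 2 / n := by
      rw [inv_pow, div_pow, Real.sq_sqrt hn'.le, inv_div]
    rw [h5]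
    calc δ ^ 2 / n * ((1 / (4 * δ)) ^ 2 * quadForm (funCov (expWeight K s))⁻¹ (x - y))
        ≤ δ ^ 2 / n * ((1 / (4 * δ)) ^ 2 * (16 * n)) := by gcongr
      _ = 1 := by field_simp; norm_num
  · set L := volume.real (core K s)
    set V := volume.real K
    have hV : V * w ≤ 4 / 3 * S * L := by linarith
    have hscale : (1 + 1 / (4 * δ)) ^ n = (1 + 4 * δ) ^ n * (1 / (4 * δ)) ^ n := by
      rw [← mul_pow]
      congr 1
      field_simp
      ring
    have htn : 0 < (1 / (4 * δ)) ^ n := by positivity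
    rw [hscale] at hcard
    have hcard' : Λ.card * L ≤ (1 + 4 * δ) ^ n * V := by
      refine le_of_mul_le_mul_left ?_ htn
      linarith
    have hpow : (1 + 4 * δ) ^ n ≤ (12 * δ) ^ n :=
      pow_le_pow_left₀ (by positivity) (by linarith) n
    rw [le_div_iff₀ hw0]
    refine le_of_mul_le_mul_right ?_ hL0
    calc Λ.card * w * L = Λ.card * L * w := by ring
      _ ≤ (1 + 4 * δ) ^ n * V * w := by gcongr
      _ = (1 + 4 * δ) ^ n * (V * w) := by ring
      _ ≤ (12 * δ) ^ n * (4 / 3 * S * L) := by gcongr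
      _ = (12 * δ) ^ n * (4 / 3) * S * L := by ring

end
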